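/- arXiv:1804.05082 — 2 statements merged into one kernel-verified Lean document; each statement's English description precedes it below -/
import Mathlib

section
/- Let n ≥ 2 be an integer, let ch₂ be an integer, and let d_h, d_g be real numbers such that −2 = (d_h² − d_g²) − 2·(ch₂ + 1). Set χ := n − ch₂ − 2, and assume −4 < χ < 0. If (n + ch₂)² − 2·n·d_h² > 0, then χ = −1 or χ = −3. -/
/-!
Eliminating `d_h²` by sphericity turns the discriminant into `(χ + 2)² − 2n·d_g²`, which for `n ≥ 0`
is at most `(χ + 2)²`. So positivity rules out `χ = −2`, leaving only `−1` and `−3` in the range.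
-/

section Discriminant

variable {R : Type*} [CommRing R]

lemma discriminant_eq_of_spherical {n c dh dg : R}
    (hsph : -2 = (dh ^ 2 - dg ^ 2) - 2 * (c + 1)) :
    (n + c) ^ 2 - 2 * n * dh ^ 2 = (n - c) ^ 2 - 2 * n * dg ^ 2 := by
  linear_combination 2 * n * hsph

variable [LinearOrder R] [IsOrderedRing R]

lemma discriminant_le_sq_of_spherical {n c dh dg : R} (hn : 0 ≤ n)
    (hsph : -2 = (dh ^ 2 - dg ^ 2) - 2 * (c + 1)) :
    (n + c) ^ 2 - 2 * n * dh ^ 2 ≤ (n - c) ^ 2 := by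
  rw [discriminant_eq_of_spherical hsph]
  exact sub_le_self _ (mul_nonneg (mul_nonneg zero_le_two hn) (sq_nonneg dg))

lemma ne_of_discriminant_pos_of_spherical {n c dh dg : R} (hn : 0 ≤ n)
    (hsph : -2 = (dh ^ 2 - dg ^ 2) - 2 * (c + 1))
    (hdisc : 0 < (n + c) ^ 2 - 2 * n * dh ^ 2) : n ≠ c := by
  have hsq : 0 < (n - c) ^ 2 := hdisc.trans_le (discriminant_le_sq_of_spherical hn hsph)
  exact sub_ne_zero.mp (ne_zero_pow two_ne_zero hsq.ne')

theorem stmt_5_general (n ch2 : ℤ) (hn : 0 ≤ n) (dh dg : R)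
    (hsph : (-2 : R) = (dh ^ 2 - dg ^ 2) - 2 * ((ch2 : R) + 1))
    (hchi1 : -4 < n - ch2 - 2) (hchi2 : n - ch2 - 2 < 0)
    (hdisc : 0 < ((n : R) + (ch2 : R)) ^ 2 - 2 * (n : R) * dh ^ 2) :
    n - ch2 - 2 = -1 ∨ n - ch2 - 2 = -3 := by
  have hne : n ≠ ch2 := ne_of_apply_ne (Int.cast : ℤ → R) <|
    ne_of_discriminant_pos_of_spherical (Int.cast_nonneg hn) hsph hdisc
  lia

end Discriminant

/-- Rank-one case: for an integer `n ≥ 2`, an integer `ch₂`, and reals `d_h`, `d_g` with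
`−2 = (d_h² − d_g²) − 2(ch₂ + 1)`, if `χ := n − ch₂ − 2` satisfies `−4 < χ < 0` and the
discriminant `(n + ch₂)² − 2n·d_h²` is positive, then `χ = −1` or `χ = −3`. -/
theorem stmt_5 (n ch2 : ℤ) (hn : 2 ≤ n)
    (dh dg : ℝ)
    (hsph : (-2 : ℝ) = (dh ^ 2 - dg ^ 2) - 2 * ((ch2 : ℝ) + 1))
    (hchi1 : -4 < n - ch2 - 2) (hchi2 : n - ch2 - 2 < 0)
    (hdisc : ((n : ℝ) + (ch2 : ℝ)) ^ 2 - 2 * (n : ℝ) * dh ^ 2 > 0) :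
    n - ch2 - 2 = -1 ∨ n - ch2 - 2 = -3 :=
  stmt_5_general n ch2 (by lia) dh dg hsph hchi1 hchi2 hdisc
end

section
/- Let n ≥ 2 and R ≥ 2 be integers. There exists M such that for every real m ≥ M the following holds: for each integer r with 1 ≤ r ≤ R, the set C_r := {(u,t) ∈ ℝ × ℝ_{>0} : (r² − r + 2 − n − m)·(u² + t²) − 2·√(2m−2)·u + 4·(r−1) = 0} is nonempty and is contained in a circle with center on the negative u-axis; the sets C_1, …, C_R are pairwise disjoint; for each 2 ≤ r ≤ R, every point of C_{r−1} lies strictly inside the circle containing C_r; and for 2 ≤ r ≤ R the positive t-axis intercept of C_r equals t_r = 2·√((r−1)/(n + m + r − 2 − r²)), and t_2 < t_3 < … < t_R. -/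
/-- The wall `W_r` of the O'Grady vector `v_r` on the slice `P_H`, `H = (c+mf)/√(2m−2)`:
the set of points `(u, t)` with `t > 0` satisfying
`(r² − r + 2 − n − m)(u² + t²) − 2√(2m−2)·u + 4(r−1) = 0`. -/
noncomputable def wallSet (n : ℤ) (m : ℝ) (r : ℤ) : Set (ℝ × ℝ) :=
  {p | 0 < p.2 ∧
    ((r : ℝ) ^ 2 - (r : ℝ) + 2 - (n : ℝ) - m) * (p.1 ^ 2 + p.2 ^ 2)
      - 2 * Real.sqrt (2 * m - 2) * p.1 + 4 * ((r : ℝ) - 1) = 0}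

/-- The `u`-coordinate of the center of the circle cut out by the wall equation. -/
noncomputable def wallCenter (n : ℤ) (m : ℝ) (r : ℤ) : ℝ :=
  Real.sqrt (2 * m - 2) / ((r : ℝ) ^ 2 - (r : ℝ) + 2 - (n : ℝ) - m)

/-- The square of the radius of the circle cut out by the wall equation. -/
noncomputable def wallRadiusSq (n : ℤ) (m : ℝ) (r : ℤ) : ℝ :=
  (wallCenter n m r) ^ 2
    - 4 * ((r : ℝ) - 1) / ((r : ℝ) ^ 2 - (r : ℝ) + 2 - (n : ℝ) - m)

/-- The positive `t`-axis intercept `t_r = 2√((r−1)/(n + m + r − 2 − r²))`. -/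
noncomputable def tIntercept (n : ℤ) (m : ℝ) (r : ℤ) : ℝ :=
  2 * Real.sqrt (((r : ℝ) - 1) / ((n : ℝ) + m + (r : ℝ) - 2 - (r : ℝ) ^ 2))

/-!
Write the wall equation as `F_r(u, t) = 0`, where the leading coefficient `A_r` of `F_r` is
`r² − r + 2 − n − m`. For `r < r'` one has
`F_{r'} − F_r = (r' − r) ((r' + r − 1) (u² + t²) + 4)`, so `F_r` is pointwise strictly increasing
in `r ≥ 1`, whence distinct walls do not meet. If `A_r < 0`, dividing by `A_r` turns `F_r = 0` into
the equation of a circle whose interior is `F_r > 0`, and this contains all walls of smaller index.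
As `A_r` increases with `r ≥ 1`, all of this holds up to `R` as soon as `A_R < 0`.
-/

/-- The leading coefficient of the equation of `W_r`, i.e. its coefficient at `u² + t²`. -/
noncomputable def wallCoeff (n : ℤ) (m : ℝ) (r : ℤ) : ℝ :=
  (r : ℝ) ^ 2 - r + 2 - n - m

/-- The left-hand side of the equation of `W_r`, as a function on the whole plane: it cuts out the
complete circle, of which `wallSet` is the part with `t > 0`. -/
noncomputable def wallFun (n : ℤ) (m : ℝ) (r : ℤ) (p : ℝ × ℝ) : ℝ :=
  wallCoeff n m r * (p.1 ^ 2 + p.2 ^ 2) - 2 * √(2 * m - 2) * p.1 + 4 * ((r : ℝ) - 1)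

section Walls

variable {n : ℤ} {m : ℝ} {r : ℤ} {p : ℝ × ℝ}

theorem mem_wallSet : p ∈ wallSet n m r ↔ 0 < p.2 ∧ wallFun n m r p = 0 :=
  Iff.rfl

theorem tIntercept_eq (n : ℤ) (m : ℝ) (r : ℤ) :
    tIntercept n m r = 2 * √(((r : ℝ) - 1) / -wallCoeff n m r) := by
  unfold tIntercept wallCoeff
  congr 3
  ring

theorem strictMonoOn_wallCoeff (n : ℤ) (m : ℝ) :
    StrictMonoOn (wallCoeff n m) (Set.Ici 1) := by
  intro r hr r' _ hlt
  have one_le_cast : (1 : ℝ) ≤ r := by exact_mod_cast Set.mem_Ici.1 hr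
  have cast_lt : (r : ℝ) < r' := by exact_mod_cast hlt
  have diff_eq : wallCoeff n m r' - wallCoeff n m r = ((r' : ℝ) - r) * (r' + r - 1) := by
    unfold wallCoeff
    ring
  have diff_pos : 0 < ((r' : ℝ) - r) * (r' + r - 1) := mul_pos (by linarith) (by linarith)
  linarith

theorem strictMonoOn_wallFun (n : ℤ) (m : ℝ) (p : ℝ × ℝ) :
    StrictMonoOn (fun r => wallFun n m r p) (Set.Ici 1) := by
  intro r hr r' hr' hlt
  have coeff_le : wallCoeff n m r * (p.1 ^ 2 + p.2 ^ 2) ≤ wallCoeff n m r' * (p.1 ^ 2 + p.2 ^ 2) :=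
    mul_le_mul_of_nonneg_right (strictMonoOn_wallCoeff n m hr hr' hlt).le (by positivity)
  have cast_lt : (r : ℝ) < r' := by exact_mod_cast hlt
  simp only [wallFun]
  linarith

theorem disjoint_wallSet {r' : ℤ} (hr : 1 ≤ r) (hr' : 1 ≤ r') (hne : r ≠ r') :
    Disjoint (wallSet n m r) (wallSet n m r') :=
  Set.disjoint_left.2 fun p hp hp' =>
    hne ((strictMonoOn_wallFun n m p).injOn hr hr' (hp.2.trans hp'.2.symm))

theorem sq_sub_wallCenter_add_sq_sub_wallRadiusSq (hA : wallCoeff n m r ≠ 0) (p : ℝ × ℝ) :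
    (p.1 - wallCenter n m r) ^ 2 + p.2 ^ 2 - wallRadiusSq n m r =
      wallFun n m r p / wallCoeff n m r := by
  have center_eq : wallCenter n m r = √(2 * m - 2) / wallCoeff n m r := rfl
  have radiusSq_eq : wallRadiusSq n m r =
      wallCenter n m r ^ 2 - 4 * ((r : ℝ) - 1) / wallCoeff n m r := rfl
  rw [radiusSq_eq, center_eq, wallFun]
  field_simp
  ring

theorem wallFun_eq_zero_iff (hA : wallCoeff n m r ≠ 0) :
    wallFun n m r p = 0 ↔ (p.1 - wallCenter n m r) ^ 2 + p.2 ^ 2 = wallRadiusSq n m r := by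
  rw [← sub_eq_zero (b := wallRadiusSq n m r), sq_sub_wallCenter_add_sq_sub_wallRadiusSq hA,
    div_eq_zero_iff, or_iff_left hA]

theorem wallFun_pos_iff (hA : wallCoeff n m r < 0) :
    0 < wallFun n m r p ↔ (p.1 - wallCenter n m r) ^ 2 + p.2 ^ 2 < wallRadiusSq n m r := by
  rw [← sub_neg (b := wallRadiusSq n m r), sq_sub_wallCenter_add_sq_sub_wallRadiusSq hA.ne,
    div_lt_iff_of_neg hA, zero_mul]

theorem inside_of_mem_wallSet {r' : ℤ} (hr : 1 ≤ r) (hlt : r < r') (hA : wallCoeff n m r' < 0)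
    (hp : p ∈ wallSet n m r) :
    (p.1 - wallCenter n m r') ^ 2 + p.2 ^ 2 < wallRadiusSq n m r' :=
  (wallFun_pos_iff hA).1
    (hp.2.symm.trans_lt (strictMonoOn_wallFun n m p hr (hr.trans hlt.le) hlt))

theorem wallCenter_neg (hm : 1 < m) (hA : wallCoeff n m r < 0) : wallCenter n m r < 0 :=
  div_neg_of_pos_of_neg (Real.sqrt_pos.2 (by linarith)) hA

theorem wallRadiusSq_pos (hm : 1 < m) (hr : 1 ≤ r) (hA : wallCoeff n m r < 0) :
    0 < wallRadiusSq n m r := by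
  have one_le_cast : (1 : ℝ) ≤ r := by exact_mod_cast hr
  have const_div_nonpos : 4 * ((r : ℝ) - 1) / wallCoeff n m r ≤ 0 :=
    div_nonpos_of_nonneg_of_nonpos (by linarith) hA.le
  exact sub_pos.2 (const_div_nonpos.trans_lt (sq_pos_of_neg (wallCenter_neg hm hA)))

theorem wallSet_nonempty (hA : wallCoeff n m r ≠ 0) (hpos : 0 < wallRadiusSq n m r) :
    (wallSet n m r).Nonempty := by
  refine ⟨(wallCenter n m r, √(wallRadiusSq n m r)),
    mem_wallSet.2 ⟨Real.sqrt_pos.2 hpos, (wallFun_eq_zero_iff hA).2 ?_⟩⟩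
  rw [sub_self, Real.sq_sqrt hpos.le]
  ring

theorem tIntercept_pos (hr : 1 < r) (hA : wallCoeff n m r < 0) : 0 < tIntercept n m r := by
  have one_lt_cast : (1 : ℝ) < r := by exact_mod_cast hr
  rw [tIntercept_eq]
  exact mul_pos two_pos (Real.sqrt_pos.2 (div_pos (sub_pos.2 one_lt_cast) (neg_pos.2 hA)))

theorem tIntercept_sq (hr : 1 ≤ r) (hA : wallCoeff n m r < 0) :
    tIntercept n m r ^ 2 = 4 * ((r : ℝ) - 1) / -wallCoeff n m r := by
  have one_le_cast : (1 : ℝ) ≤ r := by exact_mod_cast hr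
  rw [tIntercept_eq, mul_pow,
    Real.sq_sqrt (div_nonneg (sub_nonneg.2 one_le_cast) (neg_nonneg.2 hA.le))]
  ring

theorem zero_mk_mem_wallSet_iff (hr : 1 < r) (hA : wallCoeff n m r < 0) {t : ℝ} :
    ((0 : ℝ), t) ∈ wallSet n m r ↔ t = tIntercept n m r := by
  have wallFun_eq_zero_iff_sq : wallFun n m r (0, t) = 0 ↔ t ^ 2 = tIntercept n m r ^ 2 := by
    rw [tIntercept_sq hr.le hA, eq_div_iff (neg_pos.2 hA).ne', wallFun]
    constructor <;> intro h <;> linarith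
  have t_pos := tIntercept_pos hr hA
  rw [mem_wallSet, wallFun_eq_zero_iff_sq]
  constructor
  · rintro ⟨ht, h⟩
    exact (sq_eq_sq₀ ht.le t_pos.le).1 h
  · rintro rfl
    exact ⟨t_pos, rfl⟩

theorem tIntercept_lt_tIntercept {r' : ℤ} (hr : 1 ≤ r) (hlt : r < r')
    (hA : wallCoeff n m r' < 0) : tIntercept n m r < tIntercept n m r' := by
  have one_le_cast : (1 : ℝ) ≤ r := by exact_mod_cast hr
  have cast_lt : (r : ℝ) < r' := by exact_mod_cast hlt
  have coeff_lt := strictMonoOn_wallCoeff n m hr (hr.trans hlt.le) hlt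
  rw [tIntercept_eq, tIntercept_eq]
  refine mul_lt_mul_of_pos_left (Real.sqrt_lt_sqrt ?_ ?_) two_pos
  · exact div_nonneg (by linarith) (by linarith)
  · exact div_lt_div₀ (by linarith) (by linarith) (by linarith) (by linarith)

end Walls

theorem stmt_7_general (n R : ℤ) (m : ℝ) (hm : 1 < m)
    (hR : (R : ℝ) ^ 2 - R + 2 - n < m) :
    (∀ r : ℤ, 1 ≤ r → r ≤ R →
      (wallSet n m r).Nonempty ∧
      wallCenter n m r < 0 ∧ 0 < wallRadiusSq n m r ∧
      wallSet n m r ⊆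
        {p : ℝ × ℝ | (p.1 - wallCenter n m r) ^ 2 + p.2 ^ 2 = wallRadiusSq n m r}) ∧
    (∀ r r' : ℤ, 1 ≤ r → r ≤ R → 1 ≤ r' → r' ≤ R → r ≠ r' →
      wallSet n m r ∩ wallSet n m r' = ∅) ∧
    (∀ r : ℤ, 2 ≤ r → r ≤ R → ∀ p ∈ wallSet n m (r - 1),
      (p.1 - wallCenter n m r) ^ 2 + p.2 ^ 2 < wallRadiusSq n m r) ∧
    (∀ r : ℤ, 2 ≤ r → r ≤ R →
      ((0 : ℝ), tIntercept n m r) ∈ wallSet n m r ∧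
      ∀ t : ℝ, 0 < t → ((0 : ℝ), t) ∈ wallSet n m r → t = tIntercept n m r) ∧
    (∀ r : ℤ, 2 ≤ r → r < R → tIntercept n m r < tIntercept n m (r + 1)) := by
  have coeff_neg {r : ℤ} (hr : 1 ≤ r) (hrR : r ≤ R) : wallCoeff n m r < 0 :=
    ((strictMonoOn_wallCoeff n m).monotoneOn hr (hr.trans hrR) hrR).trans_lt (sub_neg.2 hR)
  refine ⟨fun r hr hrR => ?_, fun r r' hr _ hr' _ hne => ?_, fun r hr hrR p hp => ?_,
    fun r hr hrR => ?_, fun r hr hrR => ?_⟩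
  · have hA := coeff_neg hr hrR
    have radiusSq_pos := wallRadiusSq_pos hm hr hA
    exact ⟨wallSet_nonempty hA.ne radiusSq_pos, wallCenter_neg hm hA, radiusSq_pos,
      fun p hp => (wallFun_eq_zero_iff hA.ne).1 hp.2⟩
  · exact (disjoint_wallSet hr hr' hne).inter_eq
  · exact inside_of_mem_wallSet (by lia) (sub_one_lt r) (coeff_neg (by lia) hrR) hp
  · have mem_iff {t : ℝ} := zero_mk_mem_wallSet_iff (t := t) hr (coeff_neg (by lia) hrR)
    exact ⟨mem_iff.2 rfl, fun t _ ht => mem_iff.1 ht⟩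
  · exact tIntercept_lt_tIntercept (by lia) (lt_add_one r) (coeff_neg (by lia) hrR)

/-- For `n ≥ 2` and `R ≥ 2` there is an `M` such that for all `m ≥ M`: each wall `C_r`
(`1 ≤ r ≤ R`) is nonempty and lies on a circle centered on the negative `u`-axis; the walls
`C_1, …, C_R` are pairwise disjoint; each `C_{r−1}` lies strictly inside the circle containing
`C_r`; for `2 ≤ r ≤ R` the positive `t`-axis intercept of `C_r` is
`t_r = 2√((r−1)/(n+m+r−2−r²))`; and `t_2 < t_3 < … < t_R`. -/
theorem stmt_7 (n R : ℤ) (hn : 2 ≤ n) (hR : 2 ≤ R) :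
    ∃ M : ℝ, ∀ m : ℝ, M ≤ m →
      (∀ r : ℤ, 1 ≤ r → r ≤ R →
        (wallSet n m r).Nonempty ∧
        wallCenter n m r < 0 ∧ 0 < wallRadiusSq n m r ∧
        wallSet n m r ⊆
          {p : ℝ × ℝ | (p.1 - wallCenter n m r) ^ 2 + p.2 ^ 2 = wallRadiusSq n m r}) ∧
      (∀ r r' : ℤ, 1 ≤ r → r ≤ R → 1 ≤ r' → r' ≤ R → r ≠ r' →
        wallSet n m r ∩ wallSet n m r' = ∅) ∧
      (∀ r : ℤ, 2 ≤ r → r ≤ R → ∀ p ∈ wallSet n m (r - 1),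
        (p.1 - wallCenter n m r) ^ 2 + p.2 ^ 2 < wallRadiusSq n m r) ∧
      (∀ r : ℤ, 2 ≤ r → r ≤ R →
        ((0 : ℝ), tIntercept n m r) ∈ wallSet n m r ∧
        ∀ t : ℝ, 0 < t → ((0 : ℝ), t) ∈ wallSet n m r → t = tIntercept n m r) ∧
      (∀ r : ℤ, 2 ≤ r → r < R → tIntercept n m r < tIntercept n m (r + 1)) := by
  obtain ⟨M, hM⟩ := exists_gt (max 1 ((R : ℝ) ^ 2 - R + 2 - n))
  exact ⟨M, fun m hm => stmt_7_general n R m (lt_of_lt_of_le (max_lt_iff.1 hM).1 hm)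
    (lt_of_lt_of_le (max_lt_iff.1 hM).2 hm)⟩
end
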